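/- Let t > 0, λ > 0, η₁ > 1, η₂ > 0, and p, q > 0 with p + q = 1. Then H₁(t,x) = (1/(2√π))·(η₁λtp)^{1/4}·exp{η₂λtq/(η₁+η₂) − λt}·(log x)^{−3/4}·exp{2√(η₁λtp)·√(log x)}·(1 + O((log x)^{−1/2})) as x → ∞. -/

import Mathlib

open Filter Asymptotics MeasureTheory

/-- `P_{n,k}` from Kou's double exponential jump model: `P_{n,n} = p^n` and, for
`1 ≤ k ≤ n−1`,
`P_{n,k} = Σ_{i=k}^{n−1} C(n−k−1, i−k) C(n,i) (η₁/(η₁+η₂))^{i−k} (η₂/(η₁+η₂))^{n−i} p^i q^{n−i}`. -/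
noncomputable def Pcoef (η₁ η₂ p q : ℝ) (n k : ℕ) : ℝ :=
  if k = n then p ^ n
  else ∑ i ∈ Finset.Ico k n,
    ((n - k - 1).choose (i - k) : ℝ) * (n.choose i : ℝ) *
      (η₁ / (η₁ + η₂)) ^ (i - k) * (η₂ / (η₁ + η₂)) ^ (n - i) * p ^ i * q ^ (n - i)

/-- `Q_{n,k}` from Kou's double exponential jump model: `Q_{n,n} = q^n` and, for
`1 ≤ k ≤ n−1`,
`Q_{n,k} = Σ_{i=k}^{n−1} C(n−k−1, i−k) C(n,i) (η₁/(η₁+η₂))^{n−i} (η₂/(η₁+η₂))^{i−k} p^{n−i} q^i`. -/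
noncomputable def Qcoef (η₁ η₂ p q : ℝ) (n k : ℕ) : ℝ :=
  if k = n then q ^ n
  else ∑ i ∈ Finset.Ico k n,
    ((n - k - 1).choose (i - k) : ℝ) * (n.choose i : ℝ) *
      (η₁ / (η₁ + η₂)) ^ (n - i) * (η₂ / (η₁ + η₂)) ^ (i - k) * p ^ (n - i) * q ^ i

/-- The Poisson weights `π_n = e^{−λt} (λt)^n / n!`. -/
noncomputable def poisCoef (lam t : ℝ) (n : ℕ) : ℝ :=
  Real.exp (-(lam * t)) * (lam * t) ^ n / (n.factorial : ℝ)

/-- `a_k = (η₁^{k+1}/k!) Σ_{n=k+1}^∞ π_n P_{n,k+1}` (the series is reindexed by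
`n = m + (k+1)`, `m ≥ 0`). -/
noncomputable def aCoef (lam t η₁ η₂ p q : ℝ) (k : ℕ) : ℝ :=
  η₁ ^ (k + 1) / (k.factorial : ℝ) *
    ∑' m : ℕ, poisCoef lam t (m + (k + 1)) * Pcoef η₁ η₂ p q (m + (k + 1)) (k + 1)

/-- `b_k = (η₂^{k+1}/k!) Σ_{n=k+1}^∞ π_n Q_{n,k+1}` (the series is reindexed by
`n = m + (k+1)`, `m ≥ 0`). -/
noncomputable def bCoef (lam t η₁ η₂ p q : ℝ) (k : ℕ) : ℝ :=
  η₂ ^ (k + 1) / (k.factorial : ℝ) *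
    ∑' m : ℕ, poisCoef lam t (m + (k + 1)) * Qcoef η₁ η₂ p q (m + (k + 1)) (k + 1)

/-- `G₁(t,u) = Σ_{k=0}^∞ a_k u^k`. -/
noncomputable def G1 (lam t η₁ η₂ p q : ℝ) (u : ℝ) : ℝ :=
  ∑' k : ℕ, aCoef lam t η₁ η₂ p q k * u ^ k

/-- `G₂(t,−u) = Σ_{k=0}^∞ b_k u^k`; `G2m lam t η₁ η₂ p q u` stands for `G₂(t,−u)`. -/
noncomputable def G2m (lam t η₁ η₂ p q : ℝ) (u : ℝ) : ℝ :=
  ∑' k : ℕ, bCoef lam t η₁ η₂ p q k * u ^ k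

/-- `H₁(t,x) = G₁(t, log x)` for `x > 1`. -/
noncomputable def H1fun (lam t η₁ η₂ p q : ℝ) (x : ℝ) : ℝ :=
  G1 lam t η₁ η₂ p q (Real.log x)

/-- `H₂(t,x) = G₂(t, log x) = G2m(t, log(1/x))` for `0 < x < 1`. -/
noncomputable def H2fun (lam t η₁ η₂ p q : ℝ) (x : ℝ) : ℝ :=
  G2m lam t η₁ η₂ p q (Real.log x⁻¹)

/-- The density of the absolutely continuous part of the law of the exponential compound
Poisson factor: `H(t,x) = H₁(t,x) x^{−η₁−1}` for `x > 1` and `H(t,x) = H₂(t,x) x^{η₂−1}`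
for `0 < x < 1`. -/
noncomputable def Hfun (lam t η₁ η₂ p q : ℝ) (x : ℝ) : ℝ :=
  if 1 < x then H1fun lam t η₁ η₂ p q x * x ^ (-η₁ - 1)
  else H2fun lam t η₁ η₂ p q x * x ^ (η₂ - 1)

/-- The Mellin convolution of two measurable functions on `(0,∞)`:
`f ⋆_M g (x) = ∫_0^∞ f(x/t) g(t) dt/t`. -/
noncomputable def mellinConv (f g : ℝ → ℝ) (x : ℝ) : ℝ :=
  ∫ t in Set.Ioi (0:ℝ), f (x / t) * g t / t

/-!
Write `c = η₁λtp` and `A = exp (η₂λtq / (η₁ + η₂) - λt)`. In `∑ₙ π_n P_{n,k+1}` the terms with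
`i = k + 1` sum to `A (λtp)^(k+1) / (k+1)!`, while a term with `i = k + 1 + l`, `l ≥ 1`, carries
`(k+1+l)! ≥ (k+2)! l!` in its denominator, so that the others contribute
`O((λtp)^(k+1) / (k+2)!)`. Summing over `k` gives `G₁(u) = A c C₁(c u) + O(C₂(c u))` with the
Bessel–Clifford functions `C_ν(y) = ∑ₖ y^k / (k! Γ(k+ν+1))`. Poisson's integral
`√π Γ(ν+1/2) C_ν(y) = ∫_{-1}^{1} (1-s²)^(ν-1/2) exp (2√y s) ds` and Watson's lemma at the endpoint
`s = 1` yield `C_ν(y) = exp (2√y) y^(-ν/2-1/4) (1 + O(y^(-1/2))) / (2√π)`. The relative error of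
the theorem is both that of `C₁` and the ratio of `C₂` to `C₁`.
-/

open scoped Nat Real

section Series

lemma norm_tsum_sub_le_of_hasSum {ι E : Type*} [NormedAddCommGroup E] [CompleteSpace E]
    {f g : ι → E} {h : ι → ℝ} {G : E} {H : ℝ} (hg : HasSum g G) (hh : HasSum h H)
    (hfg : ∀ i, ‖f i - g i‖ ≤ h i) : ‖∑' i, f i - G‖ ≤ H := by
  have hsub : Summable fun i => f i - g i := .of_norm_bounded hh.summable hfg
  have hf : Summable f := (hsub.add hg.summable).congr fun i => sub_add_cancel (f i) (g i)
  rw [← hg.tsum_eq, ← hf.tsum_sub hg.summable]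
  exact tsum_of_norm_bounded hh hfg

lemma hasSum_pow_div_factorial (x : ℝ) : HasSum (fun n : ℕ => x ^ n / n !) (Real.exp x) := by
  simpa only [Real.exp_eq_exp_ℝ] using NormedSpace.expSeries_div_hasSum_exp x

lemma factorial_succ_mul_factorial_succ_le (k l : ℕ) :
    (k + 1)! * (l + 1)! ≤ (k + (l + 1))! := by
  induction l with
  | zero => simp
  | succ l ih =>
    calc (k + 1)! * (l + 2)! = (l + 2) * ((k + 1)! * (l + 1)!) := by
          rw [Nat.factorial_succ (l + 1)]; ring
      _ ≤ (k + (l + 1) + 1) * (k + (l + 1))! := Nat.mul_le_mul (by omega) ih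

end Series

section Coefficients

-- Since `m - 1` is truncated, the case `m = 0` is `P_{k,k} = p ^ k`.
lemma Pcoef_add_eq_sum (η₁ η₂ p q : ℝ) (m k : ℕ) :
    Pcoef η₁ η₂ p q (m + k) k = ∑ l ∈ Finset.range (m + 1),
      ((m - 1).choose l : ℝ) * (m + k).choose (k + l) *
        (η₁ / (η₁ + η₂)) ^ l * (η₂ / (η₁ + η₂)) ^ (m - l) * p ^ (k + l) * q ^ (m - l) := by
  cases m with
  | zero => simp [Pcoef]
  | succ m =>
    rw [Pcoef, if_neg (by omega), Finset.sum_Ico_eq_sum_range, Finset.sum_range_succ,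
      show m + 1 + k - k = m + 1 by omega]
    simp [show ∀ l, m + 1 + k - (k + l) = m + 1 - l by omega]

lemma poisCoef_mul_Pcoef (lam t η₁ η₂ p q : ℝ) (m k : ℕ) :
    poisCoef lam t (m + k) * Pcoef η₁ η₂ p q (m + k) k =
      Real.exp (-(lam * t)) * (lam * t * p) ^ k * ∑ l ∈ Finset.range (m + 1),
        ((m - 1).choose l : ℝ) * ((η₁ / (η₁ + η₂) * (lam * t * p)) ^ l *
          (η₂ / (η₁ + η₂) * (lam * t * q)) ^ (m - l)) / ((k + l)! * (m - l)!) := by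
  rw [poisCoef, Pcoef_add_eq_sum, Finset.mul_sum, Finset.mul_sum]
  refine Finset.sum_congr rfl fun l hl => ?_
  obtain ⟨j, rfl⟩ := Nat.exists_eq_add_of_le (Finset.mem_range_succ_iff.1 hl)
  rw [show l + j + k = k + l + j by ring, Nat.cast_add_choose, Nat.add_sub_cancel_left]
  field_simp
  ring

lemma abs_sum_choose_sub_le (x y : ℝ) (k m : ℕ) :
    |∑ l ∈ Finset.range (m + 1),
        ((m - 1).choose l : ℝ) * (x ^ l * y ^ (m - l)) / ((k + 1 + l)! * (m - l)!) -
      y ^ m / ((k + 1)! * m !)| ≤ (2 * (|x| + |y|)) ^ m / ((k + 2)! * m !) := by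
  have term_le : ∀ l ∈ Finset.range m,
      |((m - 1).choose (l + 1) : ℝ) * (x ^ (l + 1) * y ^ (m - (l + 1))) /
        ((k + 1 + (l + 1))! * (m - (l + 1))!)| ≤
      2 ^ m * (|x| ^ (l + 1) * |y| ^ (m - (l + 1)) * m.choose (l + 1)) / ((k + 2)! * m !) := by
    intro l hl
    have hchoose : ((m - 1).choose (l + 1) : ℝ) ≤ 2 ^ m := by
      exact_mod_cast (Nat.choose_le_two_pow _ _).trans (Nat.pow_le_pow_right two_pos (by omega))
    have hfact : ((k + 2)! * (l + 1)! : ℝ) ≤ (k + 1 + (l + 1))! := by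
      exact_mod_cast factorial_succ_mul_factorial_succ_le (k + 1) l
    rw [Nat.cast_choose ℝ (Finset.mem_range.1 hl), abs_div, abs_mul, abs_mul, abs_pow, abs_pow,
      Nat.abs_cast, abs_of_nonneg (by positivity : (0 : ℝ) ≤ (k + 1 + (l + 1))! * _)]
    calc _ ≤ 2 ^ m * (|x| ^ (l + 1) * |y| ^ (m - (l + 1))) /
          (((k + 2)! * (l + 1)!) * (m - (l + 1))!) := by gcongr
      _ = _ := by field_simp
  rw [Finset.sum_range_succ']
  simp only [Nat.choose_zero_right, Nat.cast_one, pow_zero, one_mul, add_zero, Nat.sub_zero,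
    add_sub_cancel_right]
  calc _ ≤ ∑ l ∈ Finset.range m, 2 ^ m *
        (|x| ^ (l + 1) * |y| ^ (m - (l + 1)) * m.choose (l + 1)) / ((k + 2)! * m ! : ℝ) :=
        (Finset.abs_sum_le_sum_abs _ _).trans (Finset.sum_le_sum term_le)
    _ ≤ ∑ l ∈ Finset.range (m + 1), 2 ^ m *
        (|x| ^ l * |y| ^ (m - l) * m.choose l) / ((k + 2)! * m ! : ℝ) := by
        rw [Finset.sum_range_succ' _ m]
        exact le_add_of_nonneg_right (by positivity)
    _ = _ := by rw [mul_pow, add_pow, Finset.mul_sum, Finset.sum_div]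

lemma abs_poisCoef_mul_Pcoef_sub_le (lam t η₁ η₂ p q : ℝ) (m k : ℕ) :
    |poisCoef lam t (m + (k + 1)) * Pcoef η₁ η₂ p q (m + (k + 1)) (k + 1) -
        Real.exp (-(lam * t)) * ((lam * t * p) ^ (k + 1) / (k + 1)!) *
          ((η₂ / (η₁ + η₂) * (lam * t * q)) ^ m / m !)| ≤
      Real.exp (-(lam * t)) * (|lam * t * p| ^ (k + 1) / (k + 2)!) *
        ((2 * (|η₁ / (η₁ + η₂) * (lam * t * p)| + |η₂ / (η₁ + η₂) * (lam * t * q)|)) ^ m /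
          m !) := by
  rw [poisCoef_mul_Pcoef]
  generalize η₁ / (η₁ + η₂) * (lam * t * p) = x
  generalize η₂ / (η₁ + η₂) * (lam * t * q) = y
  calc _ = |Real.exp (-(lam * t)) * (lam * t * p) ^ (k + 1) *
        (∑ l ∈ Finset.range (m + 1), ((m - 1).choose l : ℝ) * (x ^ l * y ^ (m - l)) /
          ((k + 1 + l)! * (m - l)!) - y ^ m / ((k + 1)! * m !))| := by
        congr 1
        field_simp
    _ ≤ Real.exp (-(lam * t)) * |lam * t * p| ^ (k + 1) *
        ((2 * (|x| + |y|)) ^ m / ((k + 2)! * m !)) := by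
        rw [abs_mul, abs_mul, Real.abs_exp, abs_pow]
        gcongr
        exact abs_sum_choose_sub_le x y k m
    _ = _ := by field_simp

lemma exists_abs_tsum_poisCoef_mul_Pcoef_sub_le (lam t η₁ η₂ p q : ℝ) : ∃ B : ℝ, ∀ k : ℕ,
    |∑' m : ℕ, poisCoef lam t (m + (k + 1)) * Pcoef η₁ η₂ p q (m + (k + 1)) (k + 1) -
        Real.exp (η₂ * lam * t * q / (η₁ + η₂) - lam * t) *
          ((lam * t * p) ^ (k + 1) / (k + 1)!)| ≤
      B * (|lam * t * p| ^ (k + 1) / (k + 2)!) := by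
  set x := η₁ / (η₁ + η₂) * (lam * t * p)
  set y := η₂ / (η₁ + η₂) * (lam * t * q) with hy
  refine ⟨Real.exp (-(lam * t)) * Real.exp (2 * (|x| + |y|)), fun k => ?_⟩
  have hexp : Real.exp (η₂ * lam * t * q / (η₁ + η₂) - lam * t) =
      Real.exp (-(lam * t)) * Real.exp y := by
    rw [← Real.exp_add, hy]
    ring_nf
  rw [hexp, mul_right_comm, mul_right_comm (Real.exp (-(lam * t))) (Real.exp (2 * _))]
  exact norm_tsum_sub_le_of_hasSum ((hasSum_pow_div_factorial y).mul_left _)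
    ((hasSum_pow_div_factorial (2 * (|x| + |y|))).mul_left _)
    fun m => abs_poisCoef_mul_Pcoef_sub_le lam t η₁ η₂ p q m k

end Coefficients

section GegenbauerMoments

lemma integral_rpow_mul_one_sub_rpow {a b : ℝ} (ha : 0 < a) (hb : 0 < b) :
    ∫ x in (0 : ℝ)..1, x ^ (a - 1) * (1 - x) ^ (b - 1) =
      Real.Gamma a * Real.Gamma b / Real.Gamma (a + b) := by
  have hcoe : Complex.betaIntegral a b =
      ((∫ x in (0 : ℝ)..1, x ^ (a - 1) * (1 - x) ^ (b - 1) : ℝ) : ℂ) := by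
    rw [Complex.betaIntegral, ← intervalIntegral.integral_ofReal]
    refine intervalIntegral.integral_congr fun x hx => ?_
    rw [Set.uIcc_of_le zero_le_one] at hx
    simp [Complex.ofReal_cpow hx.1, Complex.ofReal_cpow (sub_nonneg.2 hx.2)]
  have hbeta := ProbabilityTheory.beta_eq_betaIntegralReal a b ha hb
  rw [hcoe, Complex.ofReal_re] at hbeta
  exact hbeta.symm

variable {ν : ℝ}

lemma continuous_one_sub_sq_rpow (hν : 1 / 2 ≤ ν) :
    Continuous fun s : ℝ => (1 - s ^ 2) ^ (ν - 1 / 2) :=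
  (continuous_const.sub (continuous_pow 2)).rpow_const fun _ => Or.inr (sub_nonneg.2 hν)

lemma integral_one_sub_sq_rpow_eq_beta (hν : -(1 / 2) < ν) :
    ∫ s in (-1 : ℝ)..1, (1 - s ^ 2) ^ (ν - 1 / 2) =
      4 ^ ν * (Real.Gamma (ν + 1 / 2) * Real.Gamma (ν + 1 / 2) / Real.Gamma (2 * ν + 1)) := by
  have hsubst := intervalIntegral.mul_integral_comp_mul_sub (a := 0) (b := 1)
    (f := fun s : ℝ => (1 - s ^ 2) ^ (ν - 1 / 2)) 2 1
  rw [show 2 * 0 - 1 = (-1 : ℝ) by norm_num, show 2 * 1 - 1 = (1 : ℝ) by norm_num] at hsubst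
  have hbeta := integral_rpow_mul_one_sub_rpow (a := ν + 1 / 2) (b := ν + 1 / 2)
    (by linarith) (by linarith)
  rw [show ν + 1 / 2 + (ν + 1 / 2) = 2 * ν + 1 by ring] at hbeta
  have hpow : (4 : ℝ) ^ ν = 2 * 4 ^ (ν - 1 / 2) := by
    rw [Real.rpow_sub (by norm_num), ← Real.sqrt_eq_rpow,
      show √4 = (2 : ℝ) from (Real.sqrt_eq_iff_mul_self_eq_of_pos two_pos).2 (by norm_num)]
    ring
  rw [← hsubst, ← hbeta, hpow, mul_assoc,
    ← intervalIntegral.integral_const_mul (4 ^ (ν - 1 / 2) : ℝ)]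
  congr 1
  refine intervalIntegral.integral_congr fun x hx => ?_
  rw [Set.uIcc_of_le zero_le_one] at hx
  have hx' : 0 ≤ 1 - x := sub_nonneg.2 hx.2
  simp only [show 1 - (2 * x - 1) ^ 2 = 4 * (x * (1 - x)) by ring,
    show ν + 1 / 2 - 1 = ν - 1 / 2 by ring]
  rw [Real.mul_rpow (by norm_num) (mul_nonneg hx.1 hx'), Real.mul_rpow hx.1 hx']

lemma integral_one_sub_sq_rpow (hν : -(1 / 2) < ν) :
    ∫ s in (-1 : ℝ)..1, (1 - s ^ 2) ^ (ν - 1 / 2) =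
      √π * Real.Gamma (ν + 1 / 2) / Real.Gamma (ν + 1) := by
  have hdup := Real.Gamma_mul_Gamma_add_half (ν + 1 / 2)
  rw [show ν + 1 / 2 + 1 / 2 = ν + 1 by ring, show 2 * (ν + 1 / 2) = 2 * ν + 1 by ring,
    show 1 - (2 * ν + 1) = -(2 * ν) by ring, Real.rpow_neg two_pos.le,
    Real.rpow_mul two_pos.le, show (2 : ℝ) ^ (2 : ℝ) = 4 by norm_num] at hdup
  have hΓ : Real.Gamma (ν + 1) ≠ 0 := (Real.Gamma_pos_of_pos (by linarith)).ne'
  have hΓ' : Real.Gamma (2 * ν + 1) ≠ 0 := (Real.Gamma_pos_of_pos (by linarith)).ne'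
  have h4 : (4 : ℝ) ^ ν ≠ 0 := by positivity
  rw [integral_one_sub_sq_rpow_eq_beta hν, ← mul_div_assoc, div_eq_div_iff hΓ' hΓ]
  rw [mul_right_comm, eq_mul_inv_iff_mul_eq₀ h4] at hdup
  linear_combination Real.Gamma (ν + 1 / 2) * hdup

lemma integral_one_sub_sq_rpow_mul_pow_add_two (hν : 1 / 2 ≤ ν) (k : ℕ) :
    (k + ν + 1) * ∫ s in (-1 : ℝ)..1, (1 - s ^ 2) ^ (ν - 1 / 2) * s ^ (2 * (k + 1)) =
      (k + 1 / 2) * ∫ s in (-1 : ℝ)..1, (1 - s ^ 2) ^ (ν - 1 / 2) * s ^ (2 * k) := by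
  have hint (n : ℕ) (c : ℝ) : IntervalIntegrable
      (fun s : ℝ => c * ((1 - s ^ 2) ^ (ν - 1 / 2) * s ^ n)) volume (-1) 1 :=
    (((continuous_one_sub_sq_rpow hν).mul (continuous_pow n)).const_mul c).intervalIntegrable _ _
  -- integrate the derivative of a function vanishing at both endpoints
  have hderiv : ∀ s ∈ Set.uIcc (-1 : ℝ) 1,
      HasDerivAt (fun s : ℝ => (1 - s ^ 2) ^ (ν + 1 / 2) * s ^ (2 * k + 1))
        (2 * (k + 1 / 2) * ((1 - s ^ 2) ^ (ν - 1 / 2) * s ^ (2 * k)) -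
          2 * (k + ν + 1) * ((1 - s ^ 2) ^ (ν - 1 / 2) * s ^ (2 * (k + 1)))) s := by
    intro s hs
    rw [Set.uIcc_of_le (by norm_num)] at hs
    have hs' : 0 ≤ 1 - s ^ 2 := by nlinarith [hs.1, hs.2]
    have hsplit : (1 - s ^ 2) ^ (ν + 1 / 2) = (1 - s ^ 2) ^ (ν - 1 / 2) * (1 - s ^ 2) := by
      rw [← Real.rpow_add_one' hs' (by linarith)]
      ring_nf
    have h := (((hasDerivAt_pow 2 s).const_sub 1).rpow_const (p := ν + 1 / 2)
      (Or.inr (by linarith))).mul (hasDerivAt_pow (2 * k + 1) s)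
    refine h.congr_deriv ?_
    rw [hsplit, show ν + 1 / 2 - 1 = ν - 1 / 2 by ring]
    push_cast
    ring
  have h := intervalIntegral.integral_eq_sub_of_hasDerivAt hderiv ((hint _ _).sub (hint _ _))
  rw [intervalIntegral.integral_sub (hint _ _) (hint _ _), intervalIntegral.integral_const_mul,
    intervalIntegral.integral_const_mul] at h
  simp only [one_pow, even_two.neg_pow, sub_self, Real.zero_rpow (by linarith : ν + 1 / 2 ≠ 0),
    zero_mul] at h
  linarith

lemma integral_one_sub_sq_rpow_mul_pow (hν : 1 / 2 ≤ ν) (k : ℕ) :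
    ∫ s in (-1 : ℝ)..1, (1 - s ^ 2) ^ (ν - 1 / 2) * s ^ (2 * k) =
      √π * Real.Gamma (ν + 1 / 2) * (2 * k)! / (4 ^ k * k ! * Real.Gamma (k + ν + 1)) := by
  induction k with
  | zero => simpa using integral_one_sub_sq_rpow (by linarith)
  | succ k ih =>
    have hpos : (0 : ℝ) < k + ν + 1 := by positivity
    have hrec := integral_one_sub_sq_rpow_mul_pow_add_two hν k
    rw [ih, mul_comm, ← eq_div_iff hpos.ne'] at hrec
    rw [hrec, show ((k + 1 : ℕ) : ℝ) + ν + 1 = k + ν + 1 + 1 by push_cast; ring,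
      Real.Gamma_add_one hpos.ne', show 2 * (k + 1) = 2 * k + 1 + 1 by ring]
    simp only [Nat.factorial_succ]
    push_cast
    field_simp
    ring

end GegenbauerMoments

section ExponentialMoments

lemma hasSum_integral_mul_exp {w : ℝ → ℝ} (hw : Continuous w) (a b z : ℝ) :
    HasSum (fun n : ℕ => z ^ n / n ! * ∫ s in a..b, w s * s ^ n)
      (∫ s in a..b, w s * Real.exp (z * s)) := by
  have hseries (c x : ℝ) : HasSum (fun n : ℕ => c * (x ^ n / n !)) (c * Real.exp x) :=
    (hasSum_pow_div_factorial x).mul_left c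
  have h := intervalIntegral.hasSum_integral_of_dominated_convergence (μ := volume)
    (a := a) (b := b) (F := fun (n : ℕ) s => w s * ((z * s) ^ n / n !))
    (fun (n : ℕ) s => |w s| * (|z * s| ^ n / n !))
    (fun n => Continuous.aestronglyMeasurable (by fun_prop))
    (fun n => .of_forall fun s _ => by simp)
    (.of_forall fun s _ => (hseries |w s| |z * s|).summable)
    (by
      simp_rw [fun s => (hseries |w s| |z * s|).tsum_eq]
      exact Continuous.intervalIntegrable (by fun_prop) _ _)
    (.of_forall fun s _ => hseries (w s) (z * s))
  refine h.congr_fun fun n => ?_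
  rw [← intervalIntegral.integral_const_mul]
  congr 1 with s
  ring

lemma integral_mul_pow_eq_zero_of_even {w : ℝ → ℝ} (hw : Function.Even w) {n : ℕ} (hn : Odd n)
    (a : ℝ) : ∫ s in -a..a, w s * s ^ n = 0 := by
  have h := intervalIntegral.integral_comp_neg (a := -a) (b := a) fun s => w s * s ^ n
  simp only [hw.eq, hn.neg_pow, mul_neg, intervalIntegral.integral_neg, neg_neg] at h
  linarith

end ExponentialMoments

section Laplace

lemma integrableOn_rpow_mul_exp_neg_mul {μ z : ℝ} (hμ : -1 < μ) (hz : 0 < z) :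
    IntegrableOn (fun v : ℝ => v ^ μ * Real.exp (-(z * v))) (Set.Ioi 0) := by
  simpa using integrableOn_rpow_mul_exp_neg_mul_rpow (p := 1) hμ one_pos hz

lemma integral_rpow_mul_exp_neg_mul {μ z : ℝ} (hμ : -1 < μ) (hz : 0 < z) :
    ∫ v in Set.Ioi (0 : ℝ), v ^ μ * Real.exp (-(z * v)) = Real.Gamma (μ + 1) / z ^ (μ + 1) := by
  have h := Real.integral_rpow_mul_exp_neg_mul_Ioi (a := μ + 1) (by linarith) hz
  rwa [add_sub_cancel_right, one_div, Real.inv_rpow hz.le, inv_mul_eq_div] at h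

lemma abs_integral_rpow_mul_mul_exp_neg_sub_le {g : ℝ → ℝ} {μ L C z : ℝ} (hμ : -1 < μ)
    (hz : 0 < z) (hg : AEStronglyMeasurable g (volume.restrict (Set.Ioi 0)))
    (hgL : ∀ v > 0, |g v - L| ≤ C * v) :
    |(∫ v in Set.Ioi (0 : ℝ), v ^ μ * g v * Real.exp (-(z * v))) -
        L * (Real.Gamma (μ + 1) / z ^ (μ + 1))| ≤
      C * (Real.Gamma (μ + 2) / z ^ (μ + 2)) := by
  set K : ℝ → ℝ := fun v => v ^ μ * Real.exp (-(z * v))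
  have hK : IntegrableOn K (Set.Ioi 0) := integrableOn_rpow_mul_exp_neg_mul hμ hz
  have hbound_int : IntegrableOn (fun v => C * (v ^ (μ + 1) * Real.exp (-(z * v)))) (Set.Ioi 0) :=
    (integrableOn_rpow_mul_exp_neg_mul (by linarith) hz).const_mul C
  have hbound : ∀ᵐ v ∂volume.restrict (Set.Ioi (0 : ℝ)),
      ‖(g v - L) * K v‖ ≤ C * (v ^ (μ + 1) * Real.exp (-(z * v))) := by
    refine (ae_restrict_iff' measurableSet_Ioi).2 (.of_forall fun v (hv : 0 < v) => ?_)
    rw [norm_mul, Real.norm_of_nonneg (by positivity : 0 ≤ K v), Real.norm_eq_abs,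
      Real.rpow_add_one hv.ne']
    calc _ ≤ C * v * K v := by gcongr; exact hgL v hv
      _ = _ := by ring
  have hdiff : IntegrableOn (fun v => (g v - L) * K v) (Set.Ioi 0) :=
    hbound_int.mono' ((hg.sub aestronglyMeasurable_const).mul hK.aestronglyMeasurable) hbound
  have hsplit : ∫ v in Set.Ioi (0 : ℝ), v ^ μ * g v * Real.exp (-(z * v)) =
      (∫ v in Set.Ioi (0 : ℝ), (g v - L) * K v) + L * (Real.Gamma (μ + 1) / z ^ (μ + 1)) := by
    rw [← integral_rpow_mul_exp_neg_mul hμ hz, ← integral_const_mul,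
      ← integral_add hdiff (hK.const_mul L)]
    congr 1 with v
    ring
  have h := norm_integral_le_of_norm_le hbound_int hbound
  rw [integral_const_mul, integral_rpow_mul_exp_neg_mul (by linarith) hz,
    show μ + 1 + 1 = μ + 2 by ring] at h
  rwa [hsplit, add_sub_cancel_right]

lemma abs_one_sub_rpow_sub_one_le {μ w : ℝ} (hμ : 0 ≤ μ) (hw : w ∈ Set.Icc (0 : ℝ) 1) :
    |(1 - w) ^ μ - 1| ≤ max 1 μ * w := by
  have hw₀ : 0 ≤ 1 - w := sub_nonneg.2 hw.2
  have hw₁ : 1 - w ≤ 1 := by linarith [hw.1]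
  have hbern := one_add_mul_self_le_rpow_one_add (s := -w) (by linarith [hw.2])
    (le_max_left 1 μ)
  have hmono : (1 - w) ^ max 1 μ ≤ (1 - w) ^ μ :=
    Real.rpow_le_rpow_of_exponent_ge' hw₀ hw₁ hμ (le_max_right 1 μ)
  rw [← sub_eq_add_neg] at hbern
  rw [abs_sub_comm, abs_of_nonneg (sub_nonneg.2 (Real.rpow_le_one hw₀ hw₁ hμ))]
  linarith

lemma abs_indicator_two_sub_rpow_sub_le {μ v : ℝ} (hμ : 0 ≤ μ) (hv : 0 < v) :
    |(Set.Iic 2).indicator (fun v : ℝ => (2 - v) ^ μ) v - 2 ^ μ| ≤ 2 ^ μ * max 1 μ / 2 * v := by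
  rcases le_or_gt v 2 with h2 | h2
  · have h := abs_one_sub_rpow_sub_one_le hμ (w := v / 2) ⟨by positivity, by linarith⟩
    rw [Set.indicator_of_mem (Set.mem_Iic.2 h2), show 2 - v = 2 * (1 - v / 2) by ring,
      Real.mul_rpow two_pos.le (by linarith)]
    calc _ = 2 ^ μ * |(1 - v / 2) ^ μ - 1| := by
          rw [← mul_sub_one, abs_mul, abs_of_pos (by positivity)]
      _ ≤ 2 ^ μ * (max 1 μ * (v / 2)) := by gcongr
      _ = _ := by ring
  · rw [Set.indicator_of_notMem (by simpa using h2), zero_sub, abs_neg, abs_of_pos (by positivity)]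
    calc (2 : ℝ) ^ μ = 2 ^ μ * 1 / 2 * 2 := by ring
      _ ≤ 2 ^ μ * max 1 μ / 2 * v := by gcongr; exact le_max_left 1 μ

lemma integral_one_sub_sq_rpow_mul_exp (μ z : ℝ) :
    ∫ s in (-1 : ℝ)..1, (1 - s ^ 2) ^ μ * Real.exp (z * s) =
      Real.exp z * ∫ v in Set.Ioi (0 : ℝ),
        v ^ μ * (Set.Iic 2).indicator (fun v : ℝ => (2 - v) ^ μ) v * Real.exp (-(z * v)) := by
  have hsubst := intervalIntegral.integral_comp_sub_left (a := 0) (b := 2)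
    (fun s : ℝ => (1 - s ^ 2) ^ μ * Real.exp (z * s)) 1
  rw [show (1 : ℝ) - 2 = -1 by norm_num, sub_zero] at hsubst
  rw [← hsubst, intervalIntegral.integral_of_le two_pos.le, ← integral_const_mul,
    ← Set.Ioi_inter_Iic, ← setIntegral_indicator measurableSet_Iic]
  refine setIntegral_congr_fun measurableSet_Ioi fun v (hv : 0 < v) => ?_
  by_cases h2 : v ∈ Set.Iic 2
  · simp only [Set.indicator_of_mem h2]
    rw [show 1 - (1 - v) ^ 2 = v * (2 - v) by ring, show z * (1 - v) = z + -(z * v) by ring,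
      Real.exp_add, Real.mul_rpow hv.le (sub_nonneg.2 h2)]
    ring
  · simp [Set.indicator_of_notMem h2]

end Laplace

/-- The Bessel–Clifford function, the entire normalisation of the modified Bessel function:
`C_ν(z² / 4) = (2 / z)^ν I_ν(z)`. The series `G1` is compared with `C₁` and `C₂`. -/
noncomputable def besselClifford (ν y : ℝ) : ℝ :=
  ∑' k : ℕ, y ^ k / (k ! * Real.Gamma (k + ν + 1))

section BesselClifford

variable {ν : ℝ}

lemma hasSum_besselClifford_integral (hν : 1 / 2 ≤ ν) (z : ℝ) :
    HasSum (fun k : ℕ => (z ^ 2 / 4) ^ k / (k ! * Real.Gamma (k + ν + 1)))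
      ((∫ s in (-1 : ℝ)..1, (1 - s ^ 2) ^ (ν - 1 / 2) * Real.exp (z * s)) /
        (√π * Real.Gamma (ν + 1 / 2))) := by
  have hodd (n : ℕ) (hn : n ∉ Set.range fun k : ℕ => 2 * k) :
      z ^ n / n ! * ∫ s in (-1 : ℝ)..1, (1 - s ^ 2) ^ (ν - 1 / 2) * s ^ n = 0 := by
    rw [integral_mul_pow_eq_zero_of_even (fun s => by simp)
      (Nat.not_even_iff_odd.1 fun ⟨k, hk⟩ => hn ⟨k, by simp [hk, two_mul]⟩), mul_zero]
  have h := ((mul_right_injective₀ two_ne_zero).hasSum_iff hodd).2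
    (hasSum_integral_mul_exp (continuous_one_sub_sq_rpow hν) (-1) 1 z)
  refine (h.div_const _).congr_fun fun k => ?_
  simp only [Function.comp_apply]
  rw [integral_one_sub_sq_rpow_mul_pow hν, div_pow, ← pow_mul]
  field_simp

lemma summable_besselClifford (hν : 1 / 2 ≤ ν) {y : ℝ} (hy : 0 ≤ y) :
    Summable fun k : ℕ => y ^ k / (k ! * Real.Gamma (k + ν + 1)) := by
  have h := (hasSum_besselClifford_integral hν (2 * √y)).summable
  rwa [mul_pow, Real.sq_sqrt hy, show 2 ^ 2 * y / 4 = y by ring] at h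

lemma besselClifford_eq_integral (hν : 1 / 2 ≤ ν) {y : ℝ} (hy : 0 ≤ y) :
    besselClifford ν y =
      (∫ s in (-1 : ℝ)..1, (1 - s ^ 2) ^ (ν - 1 / 2) * Real.exp (2 * √y * s)) /
        (√π * Real.Gamma (ν + 1 / 2)) := by
  have h := (hasSum_besselClifford_integral hν (2 * √y)).tsum_eq
  rwa [mul_pow, Real.sq_sqrt hy, show 2 ^ 2 * y / 4 = y by ring] at h

lemma two_mul_sqrt_rpow {y : ℝ} (hy : 0 ≤ y) (a : ℝ) : (2 * √y) ^ a = 2 ^ a * y ^ (a / 2) := by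
  rw [Real.mul_rpow two_pos.le (Real.sqrt_nonneg y), Real.sqrt_eq_rpow, ← Real.rpow_mul hy]
  ring_nf

lemma exists_abs_besselClifford_sub_le (hν : 1 / 2 ≤ ν) : ∃ K : ℝ, ∀ y > 0,
    |besselClifford ν y - Real.exp (2 * √y) / (2 * √π) * y ^ (-(ν / 2 + 1 / 4))| ≤
      K * (Real.exp (2 * √y) * y ^ (-(ν / 2 + 3 / 4))) := by
  obtain ⟨μ, rfl⟩ : ∃ μ, ν = μ + 1 / 2 := ⟨ν - 1 / 2, by ring⟩
  have hμ : 0 ≤ μ := by linarith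
  set C := (2 : ℝ) ^ μ * max 1 μ / 2
  refine ⟨C * Real.Gamma (μ + 2) / (√π * Real.Gamma (μ + 1) * 2 ^ (μ + 2)), fun y hy => ?_⟩
  set z := 2 * √y with hz
  have hmeas : Measurable ((Set.Iic 2).indicator fun v : ℝ => (2 - v) ^ μ) :=
    ((measurable_const.sub measurable_id).pow_const μ).indicator measurableSet_Iic
  have hwatson := abs_integral_rpow_mul_mul_exp_neg_sub_le (μ := μ) (z := z) (by linarith)
    (by positivity) hmeas.aestronglyMeasurable fun v hv => abs_indicator_two_sub_rpow_sub_le hμ hv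
  have hmain : Real.exp z / (2 * √π) * y ^ (-((μ + 1 / 2) / 2 + 1 / 4)) =
      Real.exp z / (√π * Real.Gamma (μ + 1)) *
        (2 ^ μ * (Real.Gamma (μ + 1) / z ^ (μ + 1))) := by
    rw [hz, two_mul_sqrt_rpow hy.le, Real.rpow_add_one two_ne_zero,
      show (μ + 1 / 2) / 2 + 1 / 4 = (μ + 1) / 2 by ring, Real.rpow_neg hy.le]
    field_simp
  rw [besselClifford_eq_integral hν hy.le, add_sub_cancel_right, integral_one_sub_sq_rpow_mul_exp,
    show μ + 1 / 2 + 1 / 2 = μ + 1 by ring, mul_div_right_comm, hmain, ← mul_sub, abs_mul,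
    abs_of_pos (by positivity)]
  calc _ ≤ Real.exp z / (√π * Real.Gamma (μ + 1)) *
        (C * (Real.Gamma (μ + 2) / z ^ (μ + 2))) := by gcongr
    _ = _ := by
      rw [hz, two_mul_sqrt_rpow hy.le, Real.rpow_neg hy.le,
        show (μ + 1 / 2) / 2 + 3 / 4 = (μ + 2) / 2 by ring]
      field_simp

lemma besselClifford_sub_isBigO (hν : 1 / 2 ≤ ν) :
    (fun y => besselClifford ν y - Real.exp (2 * √y) / (2 * √π) * y ^ (-(ν / 2 + 1 / 4)))
      =O[atTop] fun y => Real.exp (2 * √y) * y ^ (-(ν / 2 + 3 / 4)) := by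
  obtain ⟨K, hK⟩ := exists_abs_besselClifford_sub_le hν
  refine .of_bound K ?_
  filter_upwards [eventually_gt_atTop 0] with y hy
  rw [Real.norm_eq_abs, Real.norm_of_nonneg (by positivity)]
  exact hK y hy

lemma besselClifford_isBigO (hν : 1 / 2 ≤ ν) :
    besselClifford ν =O[atTop] fun y => Real.exp (2 * √y) * y ^ (-(ν / 2 + 1 / 4)) := by
  have hmain : (fun y => Real.exp (2 * √y) / (2 * √π) * y ^ (-(ν / 2 + 1 / 4)))
      =O[atTop] fun y => Real.exp (2 * √y) * y ^ (-(ν / 2 + 1 / 4)) :=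
    (isBigO_const_mul_self (2 * √π)⁻¹ _ _).congr_left fun y => by ring
  have herr : (fun y => Real.exp (2 * √y) * y ^ (-(ν / 2 + 3 / 4)))
      =O[atTop] fun y => Real.exp (2 * √y) * y ^ (-(ν / 2 + 1 / 4)) := by
    refine .of_bound 1 ?_
    filter_upwards [eventually_ge_atTop 1] with y hy
    rw [one_mul, Real.norm_of_nonneg (by positivity), Real.norm_of_nonneg (by positivity)]
    gcongr 2
    norm_num
  exact (((besselClifford_sub_isBigO hν).trans herr).add hmain).congr_left fun y =>
    sub_add_cancel _ _

end BesselClifford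

section G1

lemma exists_abs_aCoef_sub_le (lam t η₁ η₂ p q : ℝ) : ∃ B : ℝ, ∀ k : ℕ,
    |aCoef lam t η₁ η₂ p q k - Real.exp (η₂ * lam * t * q / (η₁ + η₂) - lam * t) *
        ((η₁ * lam * t * p) ^ (k + 1) / (k ! * (k + 1)!))| ≤
      B * (|η₁ * lam * t * p| ^ (k + 1) / (k ! * (k + 2)!)) := by
  obtain ⟨B, hB⟩ := exists_abs_tsum_poisCoef_mul_Pcoef_sub_le lam t η₁ η₂ p q
  refine ⟨B, fun k => ?_⟩
  have hc : η₁ * lam * t * p = η₁ * (lam * t * p) := by ring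
  have hfactor (A S a : ℝ) : η₁ ^ (k + 1) / k ! * S - A * ((η₁ * a) ^ (k + 1) / (k ! * (k + 1)!)) =
      η₁ ^ (k + 1) / k ! * (S - A * (a ^ (k + 1) / (k + 1)!)) := by
    field_simp
    ring
  rw [aCoef, hc, hfactor, abs_mul, abs_div, abs_pow, Nat.abs_cast, abs_mul η₁]
  calc _ ≤ |η₁| ^ (k + 1) / k ! * (B * (|lam * t * p| ^ (k + 1) / (k + 2)!)) := by
        gcongr
        exact hB k
    _ = _ := by
        field_simp
        ring

variable {lam t η₁ η₂ p q : ℝ}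

lemma exists_abs_G1_sub_le (hc : 0 ≤ η₁ * lam * t * p) : ∃ B : ℝ, ∀ u ≥ 0,
    |G1 lam t η₁ η₂ p q u - Real.exp (η₂ * lam * t * q / (η₁ + η₂) - lam * t) *
        (η₁ * lam * t * p) * besselClifford 1 (η₁ * lam * t * p * u)| ≤
      B * besselClifford 2 (η₁ * lam * t * p * u) := by
  obtain ⟨B, hB⟩ := exists_abs_aCoef_sub_le lam t η₁ η₂ p q
  set c := η₁ * lam * t * p
  refine ⟨B * c, fun u hu => ?_⟩
  have hcu : 0 ≤ c * u := mul_nonneg hc hu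
  refine norm_tsum_sub_le_of_hasSum
    ((summable_besselClifford (by norm_num) hcu).hasSum.mul_left _)
    ((summable_besselClifford (by norm_num) hcu).hasSum.mul_left _) fun k => ?_
  have h1 : Real.Gamma (k + 1 + 1) = (k + 1)! := by
    exact_mod_cast Real.Gamma_nat_eq_factorial (k + 1)
  have h2 : Real.Gamma (k + 2 + 1) = (k + 2)! := by
    exact_mod_cast Real.Gamma_nat_eq_factorial (k + 2)
  rw [h1, h2, Real.norm_eq_abs, mul_pow]
  calc _ = |aCoef lam t η₁ η₂ p q k - Real.exp (η₂ * lam * t * q / (η₁ + η₂) - lam * t) *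
        (c ^ (k + 1) / (k ! * (k + 1)!))| * u ^ k := by
        rw [← abs_of_nonneg (pow_nonneg hu k), ← abs_mul, abs_of_nonneg (pow_nonneg hu k)]
        ring_nf
    _ ≤ B * (|c| ^ (k + 1) / (k ! * (k + 2)!)) * u ^ k := by
        gcongr
        exact hB k
    _ = _ := by
        rw [abs_of_nonneg hc]
        ring

lemma G1_sub_isBigO_exp_two_mul_sqrt (hc : 0 < η₁ * lam * t * p) :
    (fun u => G1 lam t η₁ η₂ p q u - Real.exp (η₂ * lam * t * q / (η₁ + η₂) - lam * t) *
        (η₁ * lam * t * p) * (Real.exp (2 * √(η₁ * lam * t * p * u)) / (2 * √π) *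
          (η₁ * lam * t * p * u) ^ (-(3 / 4) : ℝ)))
      =O[atTop] fun u => Real.exp (2 * √(η₁ * lam * t * p * u)) *
        (η₁ * lam * t * p * u) ^ (-(5 / 4) : ℝ) := by
  obtain ⟨B, hB⟩ := exists_abs_G1_sub_le (η₂ := η₂) (q := q) hc.le
  set c := η₁ * lam * t * p
  set A := Real.exp (η₂ * lam * t * q / (η₁ + η₂) - lam * t)
  have htop : Tendsto (fun u => c * u) atTop atTop := tendsto_id.const_mul_atTop hc
  have hG1 : (fun u => G1 lam t η₁ η₂ p q u - A * c * besselClifford 1 (c * u))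
      =O[atTop] fun u => besselClifford 2 (c * u) := by
    refine .of_bound |B| ?_
    filter_upwards [eventually_ge_atTop 0] with u hu
    exact ((hB u hu).trans (le_abs_self _)).trans_eq (abs_mul _ _)
  have hbessel₂ : (fun u => besselClifford 2 (c * u))
      =O[atTop] fun u => Real.exp (2 * √(c * u)) * (c * u) ^ (-(5 / 4) : ℝ) := by
    have h := (besselClifford_isBigO (ν := 2) (by norm_num)).comp_tendsto htop
    rwa [show (2 : ℝ) / 2 + 1 / 4 = 5 / 4 by norm_num] at h
  have hbessel₁ : (fun u => besselClifford 1 (c * u) -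
        Real.exp (2 * √(c * u)) / (2 * √π) * (c * u) ^ (-(3 / 4) : ℝ))
      =O[atTop] fun u => Real.exp (2 * √(c * u)) * (c * u) ^ (-(5 / 4) : ℝ) := by
    have h := (besselClifford_sub_isBigO (ν := 1) (by norm_num)).comp_tendsto htop
    rwa [show (1 : ℝ) / 2 + 1 / 4 = 3 / 4 by norm_num,
      show (1 : ℝ) / 2 + 3 / 4 = 5 / 4 by norm_num] at h
  refine ((hG1.trans hbessel₂).add (hbessel₁.const_mul_left (A * c))).congr_left fun u => ?_
  ring

lemma G1_asymptotics_at_infinity (hc : 0 < η₁ * lam * t * p) :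
    (fun u => G1 lam t η₁ η₂ p q u -
        1 / (2 * √π) * (η₁ * lam * t * p) ^ ((1 : ℝ) / 4) *
          Real.exp (η₂ * lam * t * q / (η₁ + η₂) - lam * t) * u ^ (-(3 : ℝ) / 4) *
          Real.exp (2 * √(η₁ * lam * t * p) * √u))
      =O[atTop] fun u =>
        1 / (2 * √π) * (η₁ * lam * t * p) ^ ((1 : ℝ) / 4) *
          Real.exp (η₂ * lam * t * q / (η₁ + η₂) - lam * t) * u ^ (-(3 : ℝ) / 4) *
          Real.exp (2 * √(η₁ * lam * t * p) * √u) * u ^ (-(1 : ℝ) / 2) := by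
  have hG1 := G1_sub_isBigO_exp_two_mul_sqrt (η₂ := η₂) (q := q) hc
  set c := η₁ * lam * t * p
  set A := Real.exp (η₂ * lam * t * q / (η₁ + η₂) - lam * t)
  have hconst : c ^ (3 / 2 : ℝ) * A / (2 * √π) ≠ 0 := by positivity
  refine (hG1.trans (isBigO_self_const_mul hconst _ _)).congr' ?_ ?_ <;>
    filter_upwards [eventually_gt_atTop 0] with u hu <;>
    rw [Real.mul_rpow hc.le hu.le, Real.sqrt_mul hc.le, ← mul_assoc 2]
  · rw [show (1 : ℝ) / 4 = 1 + -(3 / 4) by norm_num, Real.rpow_one_add' hc.le (by norm_num)]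
    ring_nf
  · rw [show (1 : ℝ) / 4 = 3 / 2 + -(5 / 4) by norm_num, Real.rpow_add hc,
      show (-(5 / 4) : ℝ) = -3 / 4 + -1 / 2 by norm_num, Real.rpow_add hu]
    ring_nf

end G1

theorem H1_asymptotics_at_infinity_general
    (t lam η₁ η₂ p q : ℝ) (hc : 0 < η₁ * lam * t * p) (_hη : η₁ + η₂ ≠ 0) :
    (fun x => H1fun lam t η₁ η₂ p q x -
        1 / (2 * √π) * (η₁ * lam * t * p) ^ ((1 : ℝ) / 4) *
          Real.exp (η₂ * lam * t * q / (η₁ + η₂) - lam * t) *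
          Real.log x ^ (-(3 : ℝ) / 4) *
          Real.exp (2 * √(η₁ * lam * t * p) * √(Real.log x)))
      =O[atTop]
      (fun x =>
        1 / (2 * √π) * (η₁ * lam * t * p) ^ ((1 : ℝ) / 4) *
          Real.exp (η₂ * lam * t * q / (η₁ + η₂) - lam * t) *
          Real.log x ^ (-(3 : ℝ) / 4) *
          Real.exp (2 * √(η₁ * lam * t * p) * √(Real.log x)) *
          Real.log x ^ (-(1 : ℝ) / 2)) :=
  (G1_asymptotics_at_infinity hc).comp_tendsto Real.tendsto_log_atTop

/-- Theorem: asymptotic behavior of `H₁(t,x)` as `x → ∞`: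
`H₁(t,x) = (1/(2√π)) (η₁λtp)^{1/4} exp{η₂λtq/(η₁+η₂) − λt} (log x)^{−3/4}`
`· exp{2√(η₁λtp) √(log x)} (1 + O((log x)^{−1/2}))` as `x → ∞`. -/
theorem H1_asymptotics_at_infinity
    (t lam η₁ η₂ p q : ℝ)
    (ht : 0 < t) (hlam : 0 < lam) (hη₁ : 1 < η₁) (hη₂ : 0 < η₂)
    (hp : 0 < p) (hq : 0 < q) (hpq : p + q = 1) :
    (fun x => H1fun lam t η₁ η₂ p q x -
        1 / (2 * Real.sqrt Real.pi) * (η₁ * lam * t * p) ^ ((1:ℝ)/4) *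
          Real.exp (η₂ * lam * t * q / (η₁ + η₂) - lam * t) *
          (Real.log x) ^ (-(3:ℝ)/4) *
          Real.exp (2 * Real.sqrt (η₁ * lam * t * p) * Real.sqrt (Real.log x)))
      =O[atTop]
      (fun x =>
        1 / (2 * Real.sqrt Real.pi) * (η₁ * lam * t * p) ^ ((1:ℝ)/4) *
          Real.exp (η₂ * lam * t * q / (η₁ + η₂) - lam * t) *
          (Real.log x) ^ (-(3:ℝ)/4) *
          Real.exp (2 * Real.sqrt (η₁ * lam * t * p) * Real.sqrt (Real.log x)) *
          (Real.log x) ^ (-(1:ℝ)/2)) := by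
  have hη₁' : 0 < η₁ := one_pos.trans hη₁
  exact H1_asymptotics_at_infinity_general t lam η₁ η₂ p q
    (mul_pos (mul_pos (mul_pos hη₁' hlam) ht) hp) (add_pos hη₁' hη₂).ne'
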